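/- For all multi-indices I (of coordinate derivatives) and J (of Lorentz boosts), the function Ξ^{I,J} := (t/s̃) · ∂^I L^J (s̃/t), where s̃ = √(t²-|x|²) and ∂^I L^J is applied to the function (t,x) ↦ s̃/t, is smooth on the closed cone K̄ = {(t,x) : |x| ≤ t-1}, is homogeneous of degree η for some η ≤ 0, and is bounded on K̄ together with all of its derivatives; in particular there is a constant C(|I|,|J|) with |(t/s̃) ∂^I L^J (s̃/t)| ≤ C(|I|,|J|) on K̄. -/

import Mathlib

/-!
Write `t = p 0`, `σ = t² - |x|²`, so that `st = √σ`, and work on the open cone `{t > 0, σ > 0}`,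
which contains `Kbar`. Let `𝒜` be the algebra of functions generated by the constants, `x_a / t`,
`1 / t` and `t / σ`, graded so that `x_a / t` has degree `0` and the other two generators have
degree `1`; an element of degree `n` is homogeneous of degree `-n` as a function.

* Each generator is bounded by `1` on `Kbar`: there `|x| ≤ t - 1`, hence `t ≥ 1` and
  `σ ≥ 2 t - 1 ≥ t`. So every element of `𝒜` is bounded on `Kbar` (`ConeAlg.bounded`).
* Each `∂_α` maps degree `n` to degree `n + 1` and each boost preserves the degree
  (`ConeAlg.pd_rep`, `ConeAlg.Lb_rep`); it suffices to check the generators.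
* The logarithmic derivatives of `s̃ / t` lie in `𝒜`: `∂_α (s̃ / t)` and `L_a (s̃ / t)` are `s̃ / t`
  times an element of `𝒜`, of degree `1` and `0` respectively (`pd_st_div`, `Lb_st_div`). Indeed
  `∂_t s̃ = s̃ · (t / σ)`, `∂_a s̃ = - s̃ · (x_a / t) (t / σ)` and `L_a s̃ = 0`.

Hence `∂^I L^J (s̃ / t) = (s̃ / t) · f` with `f ∈ 𝒜` of degree `|I|`, and `Ξ^{I,J} = f` on the cone.
-/

noncomputable section

open MeasureTheory Real

def pd (α : Fin 4) (u : (Fin 4 → ℝ) → ℝ) : (Fin 4 → ℝ) → ℝ :=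
  fun p => fderiv ℝ u p (Pi.single α 1)

def pdI : List (Fin 4) → ((Fin 4 → ℝ) → ℝ) → ((Fin 4 → ℝ) → ℝ)
  | [], u => u
  | α :: I, u => pd α (pdI I u)

def Lb (a : Fin 3) (u : (Fin 4 → ℝ) → ℝ) : (Fin 4 → ℝ) → ℝ :=
  fun p => p a.succ * pd 0 u p + p 0 * pd a.succ u p

def LJ : List (Fin 3) → ((Fin 4 → ℝ) → ℝ) → ((Fin 4 → ℝ) → ℝ)
  | [], u => u
  | a :: J, u => Lb a (LJ J u)

def sdu (a : Fin 3) (u : (Fin 4 → ℝ) → ℝ) : (Fin 4 → ℝ) → ℝ :=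
  fun p => (p a.succ / p 0) * pd 0 u p + pd a.succ u p

def Box (u : (Fin 4 → ℝ) → ℝ) : (Fin 4 → ℝ) → ℝ :=
  fun p => -(pd 0 (pd 0 u) p) + ∑ a : Fin 3, pd a.succ (pd a.succ u) p

def rad (x : Fin 3 → ℝ) : ℝ := Real.sqrt (∑ a, (x a)^2)

def sp (p : Fin 4 → ℝ) : Fin 3 → ℝ := fun a => p a.succ

def hyp (s : ℝ) (x : Fin 3 → ℝ) : Fin 4 → ℝ :=
  Fin.cons (Real.sqrt (s^2 + ∑ a, (x a)^2)) x

def L2f (s : ℝ) (w : (Fin 4 → ℝ) → ℝ) : ℝ :=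
  Real.sqrt (∫ x : Fin 3 → ℝ, (w (hyp s x))^2)

def SuppK (u : (Fin 4 → ℝ) → ℝ) : Prop :=
  ∀ p : Fin 4 → ℝ, p 0 - 1 < rad (sp p) → u p = 0

def Em (s : ℝ) (u : (Fin 4 → ℝ) → ℝ) : ℝ :=
  ∫ x : Fin 3 → ℝ,
    (((s / hyp s x 0) * pd 0 u (hyp s x))^2 + ∑ a : Fin 3, (sdu a u (hyp s x))^2)

def Emc (c s : ℝ) (u : (Fin 4 → ℝ) → ℝ) : ℝ :=
  Em s u + c^2 * ∫ x : Fin 3 → ℝ, (u (hyp s x))^2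

def Kset : Set (Fin 4 → ℝ) := {p | rad (sp p) < p 0 - 1}

/-- The function `s̃ = √(t² - r²)`. -/
def st (p : Fin 4 → ℝ) : ℝ := Real.sqrt ((p 0)^2 - ∑ a : Fin 3, (p a.succ)^2)

/-- The closed cone `K̄ = {|x| ≤ t-1}`. -/
def Kbar : Set (Fin 4 → ℝ) := {p | rad (sp p) ≤ p 0 - 1}

/-- `Ξ^{I,J} = (t/s̃) ∂^I L^J (s̃/t)`. -/
def Xi (I : List (Fin 4)) (J : List (Fin 3)) (p : Fin 4 → ℝ) : ℝ :=
  (p 0 / st p) * pdI I (LJ J (fun q => st q / q 0)) p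

/-! ### The cone -/

/-- `σ = t² - |x|²`, the square of `st` inside the light cone. -/
def sig (p : Fin 4 → ℝ) : ℝ := (p 0)^2 - ∑ a : Fin 3, (p a.succ)^2

/-- The open solid future light cone `{t > 0, |x| < t}`. -/
def Cone : Set (Fin 4 → ℝ) := {p | 0 < p 0 ∧ 0 < sig p}

lemma contDiff_sig : ContDiff ℝ (⊤ : ℕ∞) sig := by
  unfold sig; fun_prop

lemma isOpen_Cone : IsOpen Cone :=
  (isOpen_lt continuous_const (continuous_apply 0)).inter
    (isOpen_lt continuous_const contDiff_sig.continuous)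

lemma Kbar_bounds {p : Fin 4 → ℝ} (hp : p ∈ Kbar) : 1 ≤ p 0 ∧ p 0 ≤ sig p := by
  have h : √(∑ a : Fin 3, (p a.succ)^2) ≤ p 0 - 1 := hp
  have h0 : 0 ≤ ∑ a : Fin 3, (p a.succ)^2 := Finset.sum_nonneg fun a _ => sq_nonneg _
  have h1 := Real.sqrt_nonneg (∑ a : Fin 3, (p a.succ)^2)
  have h2 := Real.sq_sqrt h0
  refine ⟨by linarith, ?_⟩
  unfold sig
  nlinarith

lemma Kbar_subset : Kbar ⊆ Cone := fun p hp => by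
  obtain ⟨h1, h2⟩ := Kbar_bounds hp
  exact ⟨by linarith, by linarith⟩

/-! ### Derivation rules -/

lemma pd_congr {f g : (Fin 4 → ℝ) → ℝ} (h : Set.EqOn f g Cone) (α : Fin 4) :
    Set.EqOn (pd α f) (pd α g) Cone := fun p hp => by
  have : f =ᶠ[nhds p] g := Filter.eventuallyEq_of_mem (isOpen_Cone.mem_nhds hp) h
  simp only [pd, this.fderiv_eq]

lemma Lb_congr {f g : (Fin 4 → ℝ) → ℝ} (h : Set.EqOn f g Cone) (a : Fin 3) :
    Set.EqOn (Lb a f) (Lb a g) Cone := fun p hp => by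
  simp only [Lb, pd_congr h _ hp]

lemma pd_const (α : Fin 4) (c : ℝ) (p : Fin 4 → ℝ) : pd α (fun _ => c) p = 0 := by
  simp [pd]

lemma pd_add (α : Fin 4) {f g : (Fin 4 → ℝ) → ℝ} {p : Fin 4 → ℝ}
    (hf : DifferentiableAt ℝ f p) (hg : DifferentiableAt ℝ g p) :
    pd α (fun q => f q + g q) p = pd α f p + pd α g p := by
  simp only [pd, fderiv_fun_add hf hg, add_apply]

lemma pd_mul (α : Fin 4) {f g : (Fin 4 → ℝ) → ℝ} {p : Fin 4 → ℝ}
    (hf : DifferentiableAt ℝ f p) (hg : DifferentiableAt ℝ g p) :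
    pd α (fun q => f q * g q) p = pd α f p * g p + f p * pd α g p := by
  simp only [pd, fderiv_fun_mul hf hg, add_apply,
    smul_apply, smul_eq_mul]
  ring

lemma pd_inv (α : Fin 4) {f : (Fin 4 → ℝ) → ℝ} {p : Fin 4 → ℝ}
    (hf : DifferentiableAt ℝ f p) (h : f p ≠ 0) :
    pd α (fun q => (f q)⁻¹) p = -pd α f p / (f p)^2 := by
  have := (hasDerivAt_inv h).comp_hasFDerivAt p hf.hasFDerivAt
  have h2 : fderiv ℝ (fun q => (f q)⁻¹) p = _ := this.fderiv
  simp only [pd, h2, smul_apply, smul_eq_mul]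
  field_simp

lemma pd_coord (α β : Fin 4) (p : Fin 4 → ℝ) :
    pd α (fun q => q β) p = if β = α then 1 else 0 := by
  have : fderiv ℝ (fun q : Fin 4 → ℝ => q β) p = ContinuousLinearMap.proj β :=
    (ContinuousLinearMap.proj (R := ℝ) (φ := fun _ : Fin 4 => ℝ) β).fderiv
  simp [pd, this, Pi.single_apply]

lemma differentiable_sig : Differentiable ℝ sig := contDiff_sig.differentiable (by simp)

lemma pd_sig (α : Fin 4) (p : Fin 4 → ℝ) :
    pd α sig p = if α = 0 then 2 * p 0 else -(2 * p α) := by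
  have h : ∀ β : Fin 4, HasFDerivAt (fun q : Fin 4 → ℝ => (q β)^2)
      ((2 * p β) • ContinuousLinearMap.proj (R := ℝ) (φ := fun _ : Fin 4 => ℝ) β) p := by
    intro β
    have := ((ContinuousLinearMap.proj (R := ℝ) (φ := fun _ : Fin 4 => ℝ) β).hasFDerivAt
      (x := p)).pow 2
    simpa using this
  have h2 := (h 0).sub (HasFDerivAt.fun_sum (u := Finset.univ) fun (a : Fin 3) _ => h a.succ)
  have h3 : fderiv ℝ sig p = _ := h2.fderiv
  simp only [pd, h3]
  fin_cases α <;> simp [Fin.sum_univ_three, Fin.ext_iff]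

lemma pd_st (α : Fin 4) {p : Fin 4 → ℝ} (hp : p ∈ Cone) :
    pd α st p = pd α sig p / (2 * st p) := by
  have := (differentiable_sig p).hasFDerivAt.sqrt hp.2.ne'
  have h2 : fderiv ℝ st p = _ := this.fderiv
  simp only [pd, h2, smul_apply, smul_eq_mul]
  change 1 / (2 * st p) * _ = _
  ring

lemma Lb_add (a : Fin 3) {f g : (Fin 4 → ℝ) → ℝ} {p : Fin 4 → ℝ}
    (hf : DifferentiableAt ℝ f p) (hg : DifferentiableAt ℝ g p) :
    Lb a (fun q => f q + g q) p = Lb a f p + Lb a g p := by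
  simp only [Lb, pd_add _ hf hg]; ring

lemma Lb_mul (a : Fin 3) {f g : (Fin 4 → ℝ) → ℝ} {p : Fin 4 → ℝ}
    (hf : DifferentiableAt ℝ f p) (hg : DifferentiableAt ℝ g p) :
    Lb a (fun q => f q * g q) p = Lb a f p * g p + f p * Lb a g p := by
  simp only [Lb, pd_mul _ hf hg]; ring

/-! ### The graded algebra of coefficients -/

/-- `ConeAlg n f`: `f` lies in the degree-`n` part of the algebra generated by the constants and
`x_a / t` (degree `0`) and by `1 / t` and `t / σ` (degree `1`). -/
inductive ConeAlg : ℕ → ((Fin 4 → ℝ) → ℝ) → Prop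
  | zero (n : ℕ) : ConeAlg n (fun _ => 0)
  | const (c : ℝ) : ConeAlg 0 (fun _ => c)
  | slope (a : Fin 3) : ConeAlg 0 (fun p => p a.succ * (p 0)⁻¹)
  | invT : ConeAlg 1 (fun p => (p 0)⁻¹)
  | wt : ConeAlg 1 (fun p => p 0 * (sig p)⁻¹)
  | add {n : ℕ} {f g : (Fin 4 → ℝ) → ℝ} :
      ConeAlg n f → ConeAlg n g → ConeAlg n (fun p => f p + g p)
  | mul {n m : ℕ} {f g : (Fin 4 → ℝ) → ℝ} :
      ConeAlg n f → ConeAlg m g → ConeAlg (n + m) (fun p => f p * g p)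

lemma ConeAlg.mul' {n m k : ℕ} {f g : (Fin 4 → ℝ) → ℝ} (hf : ConeAlg n f) (hg : ConeAlg m g)
    (h : n + m = k) : ConeAlg k (fun p => f p * g p) := h ▸ hf.mul hg

lemma ConeAlg.smul {n : ℕ} {f : (Fin 4 → ℝ) → ℝ} (hf : ConeAlg n f) (c : ℝ) :
    ConeAlg n (fun p => c * f p) := (ConeAlg.const c).mul' hf (zero_add n)

lemma ConeAlg.contDiffOn {n : ℕ} {f : (Fin 4 → ℝ) → ℝ} (hf : ConeAlg n f) :
    ContDiffOn ℝ (⊤ : ℕ∞) f Cone := by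
  have hc : ∀ β : Fin 4, ContDiffOn ℝ (⊤ : ℕ∞) (fun p : Fin 4 → ℝ => p β) Cone :=
    fun β => (contDiff_apply ℝ ℝ β).contDiffOn
  have hi := (hc 0).inv fun p hp => hp.1.ne'
  induction hf with
  | zero n => exact contDiffOn_const
  | const c => exact contDiffOn_const
  | slope a => exact (hc _).mul hi
  | invT => exact hi
  | wt => exact (hc 0).mul (contDiff_sig.contDiffOn.inv fun p hp => hp.2.ne')
  | add _ _ h1 h2 => exact h1.add h2
  | mul _ _ h1 h2 => exact h1.mul h2

lemma ConeAlg.differentiableAt {n : ℕ} {f : (Fin 4 → ℝ) → ℝ} (hf : ConeAlg n f)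
    {p : Fin 4 → ℝ} (hp : p ∈ Cone) : DifferentiableAt ℝ f p :=
  (hf.contDiffOn.contDiffAt (isOpen_Cone.mem_nhds hp)).differentiableAt (by simp)

lemma ConeAlg.bounded {n : ℕ} {f : (Fin 4 → ℝ) → ℝ} (hf : ConeAlg n f) :
    ∃ C : ℝ, 0 < C ∧ ∀ p ∈ Kbar, |f p| ≤ C := by
  induction hf with
  | zero n => exact ⟨1, one_pos, by simp⟩
  | const c => exact ⟨|c| + 1, by positivity, fun p _ => by linarith⟩
  | slope a =>
    refine ⟨1, one_pos, fun p hp => ?_⟩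
    have h := (Kbar_subset hp).2
    have ht := (Kbar_subset hp).1
    have h3 : (p a.succ)^2 ≤ ∑ a : Fin 3, (p a.succ)^2 :=
      Finset.single_le_sum (f := fun a : Fin 3 => (p a.succ)^2)
        (fun b _ => sq_nonneg _) (Finset.mem_univ a)
    unfold sig at h
    beta_reduce
    rw [← div_eq_mul_inv, abs_div, abs_of_pos ht, div_le_one ht]
    exact abs_le_of_sq_le_sq (by linarith) ht.le
  | invT =>
    refine ⟨1, one_pos, fun p hp => ?_⟩
    have ht := (Kbar_bounds hp).1
    rw [abs_of_nonneg (by positivity)]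
    exact inv_le_one_of_one_le₀ ht
  | wt =>
    refine ⟨1, one_pos, fun p hp => ?_⟩
    obtain ⟨h1, h2⟩ := Kbar_bounds hp
    have h3 := (Kbar_subset hp).2
    beta_reduce
    rw [← div_eq_mul_inv, abs_of_nonneg (by positivity), div_le_one h3]
    exact h2
  | add _ _ h1 h2 =>
    obtain ⟨C, hC, h1⟩ := h1
    obtain ⟨D, hD, h2⟩ := h2
    exact ⟨C + D, by positivity, fun p hp =>
      (abs_add_le _ _).trans (add_le_add (h1 p hp) (h2 p hp))⟩
  | mul _ _ h1 h2 =>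
    obtain ⟨C, hC, h1⟩ := h1
    obtain ⟨D, hD, h2⟩ := h2
    refine ⟨C * D, by positivity, fun p hp => ?_⟩
    rw [abs_mul]
    exact mul_le_mul (h1 p hp) (h2 p hp) (abs_nonneg _) hC.le

lemma sig_smul (r : ℝ) (p : Fin 4 → ℝ) : sig (fun i => r * p i) = r^2 * sig p := by
  simp only [sig, mul_pow, ← Finset.mul_sum]; ring

lemma ConeAlg.homogeneous {n : ℕ} {f : (Fin 4 → ℝ) → ℝ} (hf : ConeAlg n f) {r : ℝ} (hr : 0 < r)
    (p : Fin 4 → ℝ) : f (fun i => r * p i) = (r ^ n)⁻¹ * f p := by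
  induction hf with
  | zero n => simp
  | const c => simp
  | slope a => simp only [mul_inv, pow_zero, inv_one]; field_simp
  | invT => simp [mul_comm]
  | wt => simp only [sig_smul, mul_inv, pow_one]; field_simp
  | add _ _ h1 h2 => simp only [h1, h2]; ring
  | mul _ _ h1 h2 => simp only [h1, h2, pow_add, mul_inv]; ring

/-- The function agrees on the cone with an element of degree `n` of the coefficient algebra.
Equality is only asked on the cone because the differentiation formulas fail where `t = 0` or
`σ = 0`. -/
def ConeRep (n : ℕ) (f : (Fin 4 → ℝ) → ℝ) : Prop := ∃ g, ConeAlg n g ∧ Set.EqOn f g Cone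

/-- A derivation that sends the generators to elements of degree raised by `k` raises the degree of
every element by `k`. -/
lemma ConeAlg.rep_of_derivation (D : ((Fin 4 → ℝ) → ℝ) → ((Fin 4 → ℝ) → ℝ)) (k : ℕ)
    (hadd : ∀ f g p, DifferentiableAt ℝ f p → DifferentiableAt ℝ g p →
      D (fun q => f q + g q) p = D f p + D g p)
    (hmul : ∀ f g p, DifferentiableAt ℝ f p → DifferentiableAt ℝ g p →
      D (fun q => f q * g q) p = D f p * g p + f p * D g p)
    (hconst : ∀ c p, D (fun _ => c) p = 0)
    (hslope : ∀ a : Fin 3, ConeRep k (D fun p => p a.succ * (p 0)⁻¹))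
    (hinvT : ConeRep (1 + k) (D fun p => (p 0)⁻¹))
    (hwt : ConeRep (1 + k) (D fun p => p 0 * (sig p)⁻¹))
    {n : ℕ} {f : (Fin 4 → ℝ) → ℝ} (hf : ConeAlg n f) : ConeRep (n + k) (D f) := by
  induction hf with
  | zero n => exact ⟨_, .zero _, fun p _ => hconst 0 p⟩
  | const c => exact ⟨_, .zero _, fun p _ => hconst c p⟩
  | slope a => simpa using hslope a
  | invT => exact hinvT
  | wt => exact hwt
  | add hf hg h1 h2 =>
    obtain ⟨f', hf', h1⟩ := h1
    obtain ⟨g', hg', h2⟩ := h2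
    refine ⟨_, hf'.add hg', fun p hp => ?_⟩
    rw [hadd _ _ _ (hf.differentiableAt hp) (hg.differentiableAt hp), h1 hp, h2 hp]
  | mul hf hg h1 h2 =>
    obtain ⟨f', hf', h1⟩ := h1
    obtain ⟨g', hg', h2⟩ := h2
    refine ⟨_, (hf'.mul' hg (by omega)).add (hf.mul' hg' (by omega)), fun p hp => ?_⟩
    rw [hmul _ _ _ (hf.differentiableAt hp) (hg.differentiableAt hp), h1 hp, h2 hp]

lemma pd_invT {p : Fin 4 → ℝ} (hp : p ∈ Cone) (α : Fin 4) :
    pd α (fun q => (q 0)⁻¹) p = -(if 0 = α then 1 else 0) / (p 0)^2 := by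
  rw [pd_inv α (by fun_prop) hp.1.ne', pd_coord]

lemma pd_slope {p : Fin 4 → ℝ} (hp : p ∈ Cone) (α : Fin 4) (a : Fin 3) :
    pd α (fun q => q a.succ * (q 0)⁻¹) p =
      (if a.succ = α then 1 else 0) * (p 0)⁻¹
        + p a.succ * (-(if 0 = α then 1 else 0) / (p 0)^2) := by
  rw [pd_mul α (by fun_prop) (ConeAlg.invT.differentiableAt hp), pd_coord, pd_invT hp]

lemma pd_wt {p : Fin 4 → ℝ} (hp : p ∈ Cone) (α : Fin 4) :
    pd α (fun q => q 0 * (sig q)⁻¹) p =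
      (if 0 = α then 1 else 0) * (sig p)⁻¹
        + p 0 * (-(if α = 0 then 2 * p 0 else -(2 * p α)) / (sig p)^2) := by
  rw [pd_mul (g := fun q => (sig q)⁻¹) α (by fun_prop) ((differentiable_sig p).inv hp.2.ne'), pd_coord,
    pd_inv α (differentiable_sig p) hp.2.ne', pd_sig]

lemma ConeAlg.pd_rep {n : ℕ} {f : (Fin 4 → ℝ) → ℝ} (hf : ConeAlg n f) (α : Fin 4) :
    ConeRep (n + 1) (pd α f) := by
  refine ConeAlg.rep_of_derivation (pd α) 1 (fun f g p => pd_add α) (fun f g p => pd_mul α)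
    (pd_const α) (fun a => ?_) ?_ ?_ hf
  · refine ⟨_, (invT.smul (if a.succ = α then 1 else 0)).add
      (((slope a).mul' invT (zero_add 1)).smul (-(if 0 = α then 1 else 0))), fun p hp => ?_⟩
    have := hp.1.ne'
    rw [pd_slope hp]; field_simp
  · refine ⟨_, (invT.mul invT).smul (-(if 0 = α then 1 else 0)), fun p hp => ?_⟩
    have := hp.1.ne'
    rw [pd_invT hp]; field_simp
  · rcases Fin.eq_zero_or_eq_succ α with rfl | ⟨b, rfl⟩
    · refine ⟨_, (invT.mul wt).add ((wt.mul wt).smul (-2)), fun p hp => ?_⟩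
      have := hp.1.ne'
      have := hp.2.ne'
      rw [pd_wt hp]; simp only [if_true]; field_simp
    · refine ⟨_, ((slope b).mul' (wt.mul wt) (zero_add _)).smul 2, fun p hp => ?_⟩
      have := hp.1.ne'
      have := hp.2.ne'
      rw [pd_wt hp]; simp only [Fin.succ_ne_zero, (Fin.succ_ne_zero b).symm, if_false]; field_simp
      ring

lemma ConeAlg.Lb_rep {n : ℕ} {f : (Fin 4 → ℝ) → ℝ} (hf : ConeAlg n f) (b : Fin 3) :
    ConeRep n (Lb b f) := by
  refine ConeAlg.rep_of_derivation (Lb b) 0 (fun f g p => Lb_add b) (fun f g p => Lb_mul b)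
    (fun c p => by simp [Lb, pd_const]) (fun a => ?_) ?_ ?_ hf
  · refine ⟨_, (const (if a = b then 1 else 0)).add
      (((slope a).mul (slope b)).smul (-1)), fun p hp => ?_⟩
    have := hp.1.ne'
    simp only [Lb, pd_slope hp, Fin.succ_ne_zero, (Fin.succ_ne_zero b).symm, Fin.succ_inj, if_true,
      if_false]
    field_simp
    ring
  · refine ⟨_, ((slope b).mul' invT (zero_add _)).smul (-1), fun p hp => ?_⟩
    have := hp.1.ne'
    simp only [Lb, pd_invT hp, (Fin.succ_ne_zero b).symm, if_true, if_false]
    field_simp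
    ring
  · refine ⟨_, (slope b).mul' wt (zero_add _), fun p hp => ?_⟩
    have := hp.1.ne'
    have := hp.2.ne'
    simp only [Lb, pd_wt hp, Fin.succ_ne_zero, (Fin.succ_ne_zero b).symm, if_true, if_false]
    field_simp
    ring

lemma ConeRep.of_pd {n : ℕ} {f : (Fin 4 → ℝ) → ℝ} (hf : ConeRep n f) (α : Fin 4) :
    ConeRep (n + 1) (pd α f) := by
  obtain ⟨g, hg, h⟩ := hf
  obtain ⟨k, hk, h'⟩ := hg.pd_rep α
  exact ⟨k, hk, (pd_congr h α).trans h'⟩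

lemma ConeRep.of_Lb {n : ℕ} {f : (Fin 4 → ℝ) → ℝ} (hf : ConeRep n f) (a : Fin 3) : ConeRep n (Lb a f) := by
  obtain ⟨g, hg, h⟩ := hf
  obtain ⟨k, hk, h'⟩ := hg.Lb_rep a
  exact ⟨k, hk, (Lb_congr h a).trans h'⟩

lemma ConeRep.of_LJ {n : ℕ} {f : (Fin 4 → ℝ) → ℝ} (hf : ConeRep n f) (J : List (Fin 3)) :
    ConeRep n (LJ J f) := by
  induction J with
  | nil => exact hf
  | cons a J ih => exact ih.of_Lb a

lemma ConeRep.of_pdI {n : ℕ} {f : (Fin 4 → ℝ) → ℝ} (hf : ConeRep n f) (I : List (Fin 4)) :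
    ConeRep (n + I.length) (pdI I f) := by
  induction I with
  | nil => exact hf
  | cons α I ih => exact ih.of_pd α

lemma ConeRep.bounded {n : ℕ} {f : (Fin 4 → ℝ) → ℝ} (hf : ConeRep n f) :
    ∃ C : ℝ, 0 < C ∧ ∀ p ∈ Kbar, |f p| ≤ C := by
  obtain ⟨g, hg, h⟩ := hf
  obtain ⟨C, hC, hb⟩ := hg.bounded
  exact ⟨C, hC, fun p hp => h (Kbar_subset hp) ▸ hb p hp⟩

/-! ### The function `s̃ / t` -/

lemma st_pos {p : Fin 4 → ℝ} (hp : p ∈ Cone) : 0 < st p := Real.sqrt_pos.2 hp.2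

lemma st_sq {p : Fin 4 → ℝ} (hp : p ∈ Cone) : st p ^ 2 = sig p := Real.sq_sqrt hp.2.le

lemma differentiableAt_st {p : Fin 4 → ℝ} (hp : p ∈ Cone) : DifferentiableAt ℝ st p :=
  (differentiable_sig p).sqrt hp.2.ne'

lemma differentiableAt_st_div {p : Fin 4 → ℝ} (hp : p ∈ Cone) :
    DifferentiableAt ℝ (fun q => st q / q 0) p := by
  simp only [div_eq_mul_inv]
  exact (differentiableAt_st hp).mul (ConeAlg.invT.differentiableAt hp)

lemma pd_st_div_eq (α : Fin 4) {p : Fin 4 → ℝ} (hp : p ∈ Cone) :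
    pd α (fun q => st q / q 0) p = st p / p 0 *
      ((if α = 0 then p 0 else -p α) / sig p - (if 0 = α then 1 else 0) / p 0) := by
  have h1 := hp.1.ne'
  have h2 := (st_pos hp).ne'
  simp only [div_eq_mul_inv (st _)]
  rw [pd_mul α (differentiableAt_st hp) (ConeAlg.invT.differentiableAt hp), pd_invT hp, pd_st α hp,
    pd_sig, ← st_sq hp]
  by_cases h : α = 0
  · subst h
    simp only [if_true]
    field_simp
    ring
  · simp only [h, Ne.symm h, if_false]
    field_simp
    ring

lemma pd_st_div (α : Fin 4) : ∃ g, ConeAlg 1 g ∧ ∀ p ∈ Cone,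
    pd α (fun q => st q / q 0) p = st p / p 0 * g p := by
  rcases Fin.eq_zero_or_eq_succ α with rfl | ⟨b, rfl⟩
  · refine ⟨_, ConeAlg.wt.add (ConeAlg.invT.smul (-1)), fun p hp => ?_⟩
    rw [pd_st_div_eq _ hp]
    simp only [if_true]
    ring
  · refine ⟨_, ((ConeAlg.slope b).mul' ConeAlg.wt (zero_add 1)).smul (-1), fun p hp => ?_⟩
    have := hp.1.ne'
    rw [pd_st_div_eq _ hp]
    simp only [Fin.succ_ne_zero, (Fin.succ_ne_zero b).symm, if_false]
    field_simp
    ring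

lemma Lb_st_div (a : Fin 3) {p : Fin 4 → ℝ} (hp : p ∈ Cone) :
    Lb a (fun q => st q / q 0) p = st p / p 0 * (-1 * (p a.succ * (p 0)⁻¹)) := by
  have := hp.1.ne'
  have := hp.2.ne'
  simp only [Lb, pd_st_div_eq _ hp, Fin.succ_ne_zero, (Fin.succ_ne_zero a).symm, if_true, if_false]
  field_simp
  ring

/-- The function is, on the cone, `s̃ / t` times an element of degree `n` of the coefficient
algebra. -/
def StRep (n : ℕ) (f : (Fin 4 → ℝ) → ℝ) : Prop :=
  ∃ g, ConeAlg n g ∧ Set.EqOn f (fun p => st p / p 0 * g p) Cone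

lemma StRep.of_pd {n : ℕ} {f : (Fin 4 → ℝ) → ℝ} (hf : StRep n f) (α : Fin 4) :
    StRep (n + 1) (pd α f) := by
  obtain ⟨g, hg, h⟩ := hf
  obtain ⟨g', hg', h'⟩ := hg.pd_rep α
  obtain ⟨k, hk, hs⟩ := pd_st_div α
  refine ⟨_, (hk.mul' hg (add_comm 1 n)).add hg', fun p hp => ?_⟩
  rw [pd_congr h α hp, pd_mul α (differentiableAt_st_div hp) (hg.differentiableAt hp), hs p hp,
    h' hp]
  ring

lemma StRep.of_Lb {n : ℕ} {f : (Fin 4 → ℝ) → ℝ} (hf : StRep n f) (a : Fin 3) :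
    StRep n (Lb a f) := by
  obtain ⟨g, hg, h⟩ := hf
  obtain ⟨g', hg', h'⟩ := hg.Lb_rep a
  refine ⟨_, (((ConeAlg.slope a).smul (-1)).mul' hg (zero_add n)).add hg', fun p hp => ?_⟩
  rw [Lb_congr h a hp, Lb_mul a (differentiableAt_st_div hp) (hg.differentiableAt hp),
    Lb_st_div a hp, h' hp]
  ring

lemma StRep.of_LJ (J : List (Fin 3)) : StRep 0 (LJ J fun q => st q / q 0) := by
  induction J with
  | nil => exact ⟨_, .const 1, fun p _ => (mul_one _).symm⟩
  | cons a J ih => exact ih.of_Lb a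

lemma StRep.of_pdI {n : ℕ} {f : (Fin 4 → ℝ) → ℝ} (hf : StRep n f) (I : List (Fin 4)) :
    StRep (n + I.length) (pdI I f) := by
  induction I with
  | nil => exact hf
  | cons α I ih => exact ih.of_pd α

/-- On the cone, `Ξ^{I,J}` is an element of degree `|I|` of the coefficient algebra. -/
lemma Xi_rep (I : List (Fin 4)) (J : List (Fin 3)) : ConeRep I.length (Xi I J) := by
  obtain ⟨g, hg, h⟩ := (StRep.of_LJ J).of_pdI I
  rw [zero_add] at hg
  refine ⟨g, hg, fun p hp => ?_⟩
  have := hp.1.ne'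
  have := (st_pos hp).ne'
  rw [Xi, h hp]
  field_simp

lemma Cone_smul {r : ℝ} (hr : 0 < r) {p : Fin 4 → ℝ} (hp : p ∈ Cone) :
    (fun i => r * p i) ∈ Cone := by
  refine ⟨mul_pos hr hp.1, ?_⟩
  rw [sig_smul]
  exact mul_pos (by positivity) hp.2

/-- Lemma 4.3: `Ξ^{I,J} = (t/s̃)∂^I L^J(s̃/t)` is smooth on the closed
cone `K̄`, homogeneous of some degree `η ≤ 0`, and bounded on `K̄` together with all of
its derivatives. -/
theorem Xi_smooth_homogeneous_bounded (I : List (Fin 4)) (J : List (Fin 3)) :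
    ContDiffOn ℝ (⊤ : ℕ∞) (Xi I J) Kbar ∧
    (∃ η : ℝ, η ≤ 0 ∧ ∀ r : ℝ, 1 ≤ r → ∀ p ∈ Kbar,
      Xi I J (fun i => r * p i) = r ^ η * Xi I J p) ∧
    (∀ (I₁ : List (Fin 4)) (J₁ : List (Fin 3)),
      ∃ C : ℝ, 0 < C ∧ ∀ p ∈ Kbar, |pdI I₁ (LJ J₁ (Xi I J)) p| ≤ C) ∧
    (∃ C : ℝ, 0 < C ∧ ∀ p ∈ Kbar, |Xi I J p| ≤ C) := by
  obtain ⟨g, hg, h⟩ := Xi_rep I J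
  refine ⟨(hg.contDiffOn.mono Kbar_subset).congr fun p hp => h (Kbar_subset hp),
    ⟨-(I.length : ℝ), by simp, fun r hr p hp => ?_⟩,
    fun I₁ J₁ => (((Xi_rep I J).of_LJ J₁).of_pdI I₁).bounded, (Xi_rep I J).bounded⟩
  have hr0 : 0 < r := by linarith
  rw [h (Cone_smul hr0 (Kbar_subset hp)), h (Kbar_subset hp), hg.homogeneous hr0,
    Real.rpow_neg hr0.le, Real.rpow_natCast]
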